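/- arXiv:1501.04817 — 2 statements merged into one kernel-verified Lean document; each statement's English description precedes it below -/
import Mathlib

section
/- Let Φ ∈ ℝ^{m×n} have restricted isometry constant δ_{K+1} < 1 of order K+1, let x ∈ ℝ^n be K-sparse with support T, |T| = K with K + 1 ≤ n, and let y = Φx + v. Then for every index i ∈ {1,…,n} with i ∉ T, one has |⟨φ_i, y⟩| ≤ δ_{K+1}·‖x‖₂ + √(1 + δ_1)·‖v‖₂, where δ_1 is the restricted isometry constant of order 1. -/
noncomputable section
open Finset

/-- `Vec n` is `ℝ^n` with the Euclidean (ℓ²) norm. -/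
abbrev Vec (n : ℕ) := EuclideanSpace ℝ (Fin n)

/-- The standard inner product `⟨u, v⟩ = ∑ i, u i * v i`. -/
def dot {n : ℕ} (u v : Vec n) : ℝ := ∑ i, u i * v i

/-- The `j`-th column of a matrix, as a Euclidean vector. -/
def col {m n : ℕ} (Φ : Matrix (Fin m) (Fin n) ℝ) (j : Fin n) : Vec m :=
  WithLp.toLp 2 fun i => Φ i j

/-- Matrix-vector multiplication `Φ x`, valued in Euclidean space. -/
def mulVec' {m n : ℕ} (Φ : Matrix (Fin m) (Fin n) ℝ) (x : Vec n) : Vec m :=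
  WithLp.toLp 2 fun i => ∑ j, Φ i j * x j

/-- The support of a vector, as a `Finset`. -/
def suppF {n : ℕ} (x : Vec n) : Finset (Fin n) :=
  Finset.univ.filter fun i => x i ≠ 0

/-- Restriction of a vector to an index set (zero outside the set). -/
def restrict {n : ℕ} (x : Vec n) (S : Finset (Fin n)) : Vec n :=
  WithLp.toLp 2 fun i => if i ∈ S then x i else 0

/-- `RIPConst Φ L δ` : δ is the restricted isometry constant of `Φ` of order `L`,
i.e. the smallest `c ≥ 0` such that `(1-c)‖u‖² ≤ ‖Φu‖² ≤ (1+c)‖u‖²` for all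
`L`-sparse `u`. -/
def RIPConst {m n : ℕ} (Φ : Matrix (Fin m) (Fin n) ℝ) (L : ℕ) (δ : ℝ) : Prop :=
  IsLeast {c : ℝ | 0 ≤ c ∧ ∀ u : Vec n, (suppF u).card ≤ L →
    (1 - c) * ‖u‖ ^ 2 ≤ ‖mulVec' Φ u‖ ^ 2 ∧ ‖mulVec' Φ u‖ ^ 2 ≤ (1 + c) * ‖u‖ ^ 2} δ

/-- Signal-to-noise ratio `‖Φx‖²/‖v‖²`. -/
def SNR {m n : ℕ} (Φ : Matrix (Fin m) (Fin n) ℝ) (x : Vec n) (v : Vec m) : ℝ :=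
  ‖mulVec' Φ x‖ ^ 2 / ‖v‖ ^ 2

/-- A run of `N` iterations of Orthogonal Matching Pursuit on data `(Φ, y)`:
`idx (k+1) = t^{k+1}` is the index selected at iteration `k+1`, `sets k = T^k`,
`est k = x^k` and `res k = r^k`. -/
structure OMPRun {m n : ℕ} (Φ : Matrix (Fin m) (Fin n) ℝ) (y : Vec m) (N : ℕ) where
  idx : ℕ → Fin n
  sets : ℕ → Finset (Fin n)
  est : ℕ → Vec n
  res : ℕ → Vec m
  sets_zero : sets 0 = ∅
  est_zero : est 0 = 0
  res_zero : res 0 = y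
  idx_not_mem : ∀ k < N, idx (k + 1) ∉ sets k
  idx_max : ∀ k < N, ∀ i : Fin n, i ∉ sets k →
    |dot (col Φ i) (res k)| ≤ |dot (col Φ (idx (k + 1))) (res k)|
  sets_succ : ∀ k < N, sets (k + 1) = insert (idx (k + 1)) (sets k)
  est_supp : ∀ k < N, suppF (est (k + 1)) ⊆ sets (k + 1)
  est_min : ∀ k < N, ∀ u : Vec n, suppF u ⊆ sets (k + 1) →
    ‖y - mulVec' Φ (est (k + 1))‖ ≤ ‖y - mulVec' Φ u‖
  res_succ : ∀ k < N, res (k + 1) = y - mulVec' Φ (est (k + 1))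

/-- The vector `Φᵀ w` restricted to an index set `A` (the vector of correlations
`⟨φ_i, w⟩` for `i ∈ A`, zero outside `A`), as a Euclidean vector. -/
def colDots {m n : ℕ} (Φ : Matrix (Fin m) (Fin n) ℝ) (A : Finset (Fin n)) (w : Vec m) : Vec n :=
  WithLp.toLp 2 fun i => if i ∈ A then dot (col Φ i) w else 0

/-- The vector `Φᵀ w` of all column correlations, as a plain function (so `‖·‖`
is the sup/ℓ∞ norm). -/
def dualVec {m n : ℕ} (Φ : Matrix (Fin m) (Fin n) ℝ) (w : Vec m) : Fin n → ℝ :=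
  fun i => dot (col Φ i) w

/-- `P⊥_S w` : the projection of `w` onto the orthogonal complement of the span
of the columns of `Φ` indexed by `S`. -/
def perpProj {m n : ℕ} (Φ : Matrix (Fin m) (Fin n) ℝ) (S : Finset (Fin n)) (w : Vec m) : Vec m :=
  w - (Submodule.orthogonalProjection (Submodule.span ℝ (col Φ '' (S : Set (Fin n)))) w : Vec m)

/-- The `j`-th largest value (1-indexed) among `{|x i| : i ∈ Γ}` (with
multiplicities); `0` if `j > |Γ|` or `j = 0`. -/
def kthLargest {n : ℕ} (x : Vec n) (Γ : Finset (Fin n)) (j : ℕ) : ℝ :=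
  if 1 ≤ j ∧ j ≤ Γ.card then
    (Multiset.sort (Γ.val.map fun i => |x i|) (· ≤ ·)).getD (Γ.card - j) 0
  else 0


theorem aux_dot_eq_inner {n : ℕ} (u v : Vec n) : dot u v = inner ℝ u v := by
  simp [dot, PiLp.inner_apply, mul_comm]

theorem aux_mulVec_comb {m n : ℕ} (Φ : Matrix (Fin m) (Fin n) ℝ) (x : Vec n) (i : Fin n)
    (a b : ℝ) :
    mulVec' Φ (a • EuclideanSpace.single i (1 : ℝ) + b • x) = a • col Φ i + b • mulVec' Φ x := by
  ext k
  simp only [mulVec', col, PiLp.add_apply, PiLp.smul_apply, smul_eq_mul, mul_add,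
    Finset.sum_add_distrib, Finset.mul_sum]
  congr 1
  · rw [Finset.sum_eq_single i]
    · simp [mul_comm]
    · intro j _ hj
      simp [hj]
    · simp
  · exact Finset.sum_congr rfl fun j _ => by ring

theorem aux_supp_comb {n : ℕ} (x : Vec n) (i : Fin n) (a b : ℝ) :
    (suppF (a • EuclideanSpace.single i (1 : ℝ) + b • x)).card ≤ (suppF x).card + 1 := by
  refine le_trans (Finset.card_le_card ?_) (Finset.card_insert_le i (suppF x))
  intro j hj
  by_contra hc
  simp only [suppF, Finset.mem_insert, Finset.mem_filter, Finset.mem_univ, true_and,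
    not_or, not_not] at hc hj
  apply hj
  simp [hc.1, hc.2]

theorem aux_norm_comb {n : ℕ} (x : Vec n) (i : Fin n) (hi : x i = 0) (a b : ℝ) :
    ‖a • EuclideanSpace.single i (1 : ℝ) + b • x‖ ^ 2 = a ^ 2 + b ^ 2 * ‖x‖ ^ 2 := by
  rw [norm_add_sq_real, inner_smul_left, inner_smul_right, EuclideanSpace.inner_single_left,
    norm_smul, norm_smul, mul_pow, mul_pow]
  simp [hi]

/-- upper bound on off-support correlations:
`|⟨φ_i, y⟩| ≤ δ_{K+1}‖x‖ + √(1+δ₁)‖v‖` for `i ∉ T`. -/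
theorem stmt13 {m n K : ℕ} (Φ : Matrix (Fin m) (Fin n) ℝ) (δK1 δ1 : ℝ)
    (x : Vec n) (v y : Vec m) (T : Finset (Fin n))
    (hsupp : suppF x = T) (hcard : T.card = K) (hn : K + 1 ≤ n)
    (hRIP : RIPConst Φ (K + 1) δK1) (hδ : δK1 < 1) (hRIP1 : RIPConst Φ 1 δ1)
    (hy : y = mulVec' Φ x + v) :
    ∀ i : Fin n, i ∉ T →
      |dot (col Φ i) y| ≤ δK1 * ‖x‖ + Real.sqrt (1 + δ1) * ‖v‖ := by
  intro i hi
  have hxi : x i = 0 := by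
    by_contra h
    exact hi (by rw [← hsupp]; simp [suppF, h])
  obtain ⟨⟨h0, hR⟩, -⟩ := hRIP
  obtain ⟨⟨h10, hR1⟩, -⟩ := hRIP1
  have hcs : (suppF x).card = K := by rw [hsupp, hcard]
  have hcol : ‖col Φ i‖ ≤ Real.sqrt (1 + δ1) := by
    apply Real.le_sqrt_of_sq_le
    have hs := aux_supp_comb (0 : Vec n) i 1 0
    have h := (hR1 _ (hs.trans (by simp [suppF]))).2
    rw [aux_mulVec_comb, aux_norm_comb _ _ (by simp)] at h
    simpa using h
  have hmain : |(inner ℝ (col Φ i) (mulVec' Φ x) : ℝ)| ≤ δK1 * ‖x‖ := by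
    rcases eq_or_ne x 0 with rfl | hx
    · have : mulVec' Φ (0 : Vec n) = 0 := by ext k; simp [mulVec']
      simp [this]
    · have hpos : 0 < ‖x‖ := norm_pos_iff.mpr hx
      have key : ∀ b : ℝ, b ^ 2 = 1 →
          (1 - δK1) * (2 * ‖x‖ ^ 2) ≤ ‖x‖ ^ 2 * ‖col Φ i‖ ^ 2
            + 2 * (‖x‖ * b * inner ℝ (col Φ i) (mulVec' Φ x)) + ‖mulVec' Φ x‖ ^ 2 ∧
          ‖x‖ ^ 2 * ‖col Φ i‖ ^ 2
            + 2 * (‖x‖ * b * inner ℝ (col Φ i) (mulVec' Φ x)) + ‖mulVec' Φ x‖ ^ 2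
            ≤ (1 + δK1) * (2 * ‖x‖ ^ 2) := by
        intro b hb
        have h := hR _ ((aux_supp_comb x i ‖x‖ b).trans (by rw [hcs]))
        have e : ‖‖x‖ • col Φ i + b • mulVec' Φ x‖ ^ 2 = ‖x‖ ^ 2 * ‖col Φ i‖ ^ 2
            + 2 * (‖x‖ * b * inner ℝ (col Φ i) (mulVec' Φ x)) + ‖mulVec' Φ x‖ ^ 2 := by
          rw [norm_add_sq_real, real_inner_smul_left, real_inner_smul_right, norm_smul,
            norm_smul, mul_pow, mul_pow, Real.norm_eq_abs, Real.norm_eq_abs, sq_abs, sq_abs, hb]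
          ring
        rw [aux_mulVec_comb, aux_norm_comb _ _ hxi, hb, e] at h
        rw [show 2 * ‖x‖ ^ 2 = ‖x‖ ^ 2 + 1 * ‖x‖ ^ 2 by ring]
        exact h
      obtain ⟨p1, p2⟩ := key 1 (by norm_num)
      obtain ⟨q1, q2⟩ := key (-1) (by norm_num)
      rw [abs_le]
      constructor
      · refine le_of_mul_le_mul_left ?_ hpos
        linarith
      · refine le_of_mul_le_mul_left ?_ hpos
        linarith
  rw [aux_dot_eq_inner, hy, inner_add_right]
  refine (abs_add_le _ _).trans (add_le_add hmain ?_)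
  exact (abs_real_inner_le_norm _ _).trans
    (mul_le_mul_of_nonneg_right hcol (norm_nonneg _))

end
end

section
/- Let Φ ∈ ℝ^{m×n} have restricted isometry constant δ := δ_{2K} ∈ (0,1) of order 2K, set τ := δ^{1/2}, let x ∈ ℝ^n be K-sparse with support T, |T| = K ≥ 1, set κ := max_{i,j∈T} |x_i|/|x_j|, and let y = Φx + v with v ≠ 0 and SNR ≥ κ²·δ^{−3/2}. Then for every run of K iterations of OMP applied to (Φ, y), the final residual satisfies ‖r^K‖₂² ≤ 11·⌈τK⌉·(max_{i∈T}|x_i|)² + (1 + 1/τ)·‖v‖₂². -/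
noncomputable section
open Finset

lemma le_of_sq_le_sq_aux {a b : ℝ} (h : a ^ 2 ≤ b ^ 2) (hb : 0 ≤ b) : a ≤ b :=
  abs_le_of_sq_le_sq' h hb |>.2

lemma mv_add {m n : ℕ} (Φ : Matrix (Fin m) (Fin n) ℝ) (a b : Vec n) :
    mulVec' Φ (a + b) = mulVec' Φ a + mulVec' Φ b := by
  ext i; simp [mulVec', mul_add, Finset.sum_add_distrib]

lemma mv_sub {m n : ℕ} (Φ : Matrix (Fin m) (Fin n) ℝ) (a b : Vec n) :
    mulVec' Φ (a - b) = mulVec' Φ a - mulVec' Φ b := by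
  ext i; simp [mulVec', mul_sub, Finset.sum_sub_distrib]

lemma mv_smul {m n : ℕ} (Φ : Matrix (Fin m) (Fin n) ℝ) (c : ℝ) (a : Vec n) :
    mulVec' Φ (c • a) = c • mulVec' Φ a := by
  ext i; simp only [mulVec', PiLp.smul_apply, smul_eq_mul, Finset.mul_sum]
  exact Finset.sum_congr rfl fun j _ => by ring

lemma mv_single {m n : ℕ} (Φ : Matrix (Fin m) (Fin n) ℝ) (j : Fin n) :
    mulVec' Φ (EuclideanSpace.single j (1 : ℝ)) = col Φ j := by
  ext i; simp [mulVec', col]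

lemma dot_inner {n : ℕ} (u w : Vec n) : dot u w = inner ℝ u w := by
  simp only [dot, PiLp.inner_apply, RCLike.inner_apply, conj_trivial]
  exact Finset.sum_congr rfl fun j _ => by ring

lemma inner_mv {m n : ℕ} (Φ : Matrix (Fin m) (Fin n) ℝ) (a : Vec n) (r : Vec m) :
    inner ℝ (mulVec' Φ a) r = ∑ i, a i * dot (col Φ i) r := by
  rw [← dot_inner]
  simp only [dot, mulVec', col, Finset.sum_mul, Finset.mul_sum]
  rw [Finset.sum_comm]
  exact Finset.sum_congr rfl fun i _ => Finset.sum_congr rfl fun j _ => by ring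

lemma supp_card_le {n : ℕ} {u : Vec n} {S : Finset (Fin n)} {L : ℕ}
    (h : ∀ i, i ∉ S → u i = 0) (hS : S.card ≤ L) : (suppF u).card ≤ L := by
  refine (Finset.card_le_card ?_).trans hS
  intro i hi
  by_contra hc
  exact (Finset.mem_filter.1 hi).2 (h i hc)

/-- Polarized restricted isometry inequality. -/
lemma rip_inner {m n L : ℕ} (Φ : Matrix (Fin m) (Fin n) ℝ) (δ : ℝ)
    (hR : ∀ u : Vec n, (suppF u).card ≤ L →
      (1 - δ) * ‖u‖ ^ 2 ≤ ‖mulVec' Φ u‖ ^ 2 ∧ ‖mulVec' Φ u‖ ^ 2 ≤ (1 + δ) * ‖u‖ ^ 2)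
    (S : Finset (Fin n)) (hS : S.card ≤ L) (a u : Vec n)
    (ha : ∀ i, i ∉ S → a i = 0) (hu : ∀ i, i ∉ S → u i = 0) :
    inner ℝ a u - δ * ‖a‖ * ‖u‖ ≤ inner ℝ (mulVec' Φ a) (mulVec' Φ u) := by
  have key : ∀ s t : ℝ, 4 * (s * t) * (inner ℝ a u) - 2 * δ * (s ^ 2 * ‖a‖ ^ 2 + t ^ 2 * ‖u‖ ^ 2) ≤
      4 * (s * t) * inner ℝ (mulVec' Φ a) (mulVec' Φ u) := by
    intro s t
    have h1 := (hR (s • a + t • u) (supp_card_le (S := S)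
      (fun i hi => by simp [ha i hi, hu i hi]) hS)).1
    have h2 := (hR (s • a - t • u) (supp_card_le (S := S)
      (fun i hi => by simp [ha i hi, hu i hi]) hS)).2
    rw [mv_add, mv_smul, mv_smul, norm_add_sq_real, norm_add_sq_real] at h1
    rw [mv_sub, mv_smul, mv_smul, norm_sub_sq_real, norm_sub_sq_real] at h2
    simp only [norm_smul, inner_smul_left, inner_smul_right, mul_pow, Real.norm_eq_abs, sq_abs,
      conj_trivial] at h1 h2
    nlinarith
  rcases eq_or_ne a 0 with rfl | h
  · have : mulVec' Φ 0 = 0 := by ext i; simp [mulVec']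
    simp [this]
  rcases eq_or_ne u 0 with rfl | h'
  · have : mulVec' Φ 0 = 0 := by ext i; simp [mulVec']
    simp [this]
  have pa := norm_pos_iff.2 h
  have pu := norm_pos_iff.2 h'
  have k := key ‖u‖ ‖a‖
  have pp : 0 < ‖u‖ * ‖a‖ := by positivity
  refine le_of_mul_le_mul_left ?_ pp
  nlinarith

/-- Decreasing rearrangement. -/
lemma exists_sorted {ι : Type*} [DecidableEq ι] (f : ι → ℝ) (M : ℝ) (T : Finset ι)
    (h : ∀ i ∈ T, 0 ≤ f i ∧ f i ≤ M) :
    ∃ a : ℕ → ℝ, (∀ j, 0 ≤ a j) ∧ (∀ j, T.card ≤ j → a j = 0) ∧ (∀ j < T.card, a j ≤ M) ∧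
      (∑ j ∈ Finset.range T.card, a j ^ 2 = ∑ i ∈ T, f i ^ 2) ∧
      (∀ j < T.card, ∃ B ⊆ T, B.card = j + 1 ∧ ∀ i ∈ B, a j ≤ f i) := by
  induction T using Finset.induction_on_min_value f with
  | empty => exact ⟨fun _ => 0, by simp⟩
  | @insert i s his hmin ih =>
    obtain ⟨a, a1, a2, a3, a4, a5⟩ := ih fun j hj => h j (Finset.mem_insert_of_mem hj)
    have hc := Finset.card_insert_of_notMem his
    have hi := h i (Finset.mem_insert_self _ _)
    refine ⟨fun j => if j = s.card then f i else a j, ?_, ?_, ?_, ?_, ?_⟩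
    · intro j; dsimp only; split_ifs; exacts [hi.1, a1 j]
    · intro j hj; dsimp only; rw [if_neg (by omega)]; exact a2 j (by omega)
    · intro j hj; dsimp only; split_ifs with hh; exacts [hi.2, a3 j (by omega)]
    · dsimp only
      rw [hc, Finset.sum_range_succ, Finset.sum_insert his, if_pos rfl, ← a4, add_comm]
      congr 1
      refine Finset.sum_congr rfl fun j hj => ?_
      rw [if_neg (Finset.mem_range.1 hj).ne]
    · intro j hj
      dsimp only
      split_ifs with hh
      · refine ⟨insert i s, subset_rfl, by omega, fun k hk => ?_⟩
        rcases Finset.mem_insert.1 hk with rfl | hk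
        exacts [le_rfl, hmin k hk]
      · obtain ⟨B, b1, b2, b3⟩ := a5 j (by omega)
        exact ⟨B, b1.trans (Finset.subset_insert _ _), b2, b3⟩

/-- Lower bound on the correlation selected at one step. -/
lemma corr_bound {m n L : ℕ} (Φ : Matrix (Fin m) (Fin n) ℝ) (δ : ℝ) (h0 : 0 ≤ δ)
    (hR : ∀ u : Vec n, (suppF u).card ≤ L →
      (1 - δ) * ‖u‖ ^ 2 ≤ ‖mulVec' Φ u‖ ^ 2 ∧ ‖mulVec' Φ u‖ ^ 2 ≤ (1 + δ) * ‖u‖ ^ 2)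
    (S A : Finset (Fin n)) (hS : S.card ≤ L) (hA : A ⊆ S) (x u : Vec n) (v : Vec m)
    (hu : ∀ i, i ∉ S → u i = 0) (hux : ∀ i ∈ A, u i = x i) (hAn : 0 < A.card)
    (c ξ E : ℝ) (hξ : 0 ≤ ξ) (hx : ∀ i ∈ A, ξ ≤ |x i|)
    (hc : ∀ i ∈ A, |dot (col Φ i) (mulVec' Φ u + v)| ≤ c)
    (hE : δ * ‖u‖ + √(1 + δ) * ‖v‖ ≤ √(A.card) * E) :
    ξ - E ≤ c := by
  have hs : 0 < √(A.card : ℝ) := Real.sqrt_pos.2 (by exact_mod_cast hAn)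
  have hss : √(A.card : ℝ) ^ 2 = A.card := Real.sq_sqrt (by positivity)
  have hc0 : 0 ≤ c := by
    obtain ⟨i, hi⟩ := Finset.card_pos.1 hAn
    exact (abs_nonneg _).trans (hc i hi)
  set a : Vec n := restrict x A with ha
  have ai : ∀ i, a i = if i ∈ A then x i else 0 := fun i => rfl
  have aS : ∀ i, i ∉ S → a i = 0 := fun i hi => by rw [ai, if_neg (fun h => hi (hA h))]
  have na : ‖a‖ ^ 2 = ∑ i ∈ A, x i ^ 2 := by
    rw [EuclideanSpace.norm_sq_eq]
    simp [ai, Finset.sum_ite_mem]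
  have iau : inner ℝ a u = ‖a‖ ^ 2 := by
    rw [na, ← dot_inner, dot]
    simp only [ai, ite_mul, zero_mul, Finset.sum_ite_mem, Finset.univ_inter]
    exact Finset.sum_congr rfl fun i hi => by rw [hux i hi]; ring
  have q1 : √(A.card : ℝ) * ξ ≤ ‖a‖ := by
    refine le_of_sq_le_sq_aux ?_ (norm_nonneg _)
    rw [mul_pow, hss, na, ← nsmul_eq_mul]
    refine Finset.card_nsmul_le_sum _ _ _ fun i hi => ?_
    rw [← sq_abs (x i)]
    exact pow_le_pow_left₀ hξ (hx i hi) 2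
  have p1 := rip_inner Φ δ hR S hS a u aS hu
  have p2 : -(√(1 + δ) * ‖a‖ * ‖v‖) ≤ inner ℝ (mulVec' Φ a) v := by
    have h2 := (abs_le.1 (abs_real_inner_le_norm (mulVec' Φ a) v)).1
    have h3 : ‖mulVec' Φ a‖ ≤ √(1 + δ) * ‖a‖ := by
      refine le_of_sq_le_sq_aux ?_ (by positivity)
      rw [mul_pow, Real.sq_sqrt (by linarith)]
      exact (hR a (supp_card_le aS hS)).2
    have := mul_le_mul_of_nonneg_right h3 (norm_nonneg v)
    linarith
  have p3 : inner ℝ (mulVec' Φ a) (mulVec' Φ u + v) ≤ c * (√(A.card : ℝ) * ‖a‖) := by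
    rw [inner_mv]
    simp only [ai, ite_mul, zero_mul, Finset.sum_ite_mem, Finset.univ_inter]
    have l1 : ∑ i ∈ A, |x i| ≤ √(A.card : ℝ) * ‖a‖ := by
      refine le_of_sq_le_sq_aux ?_ (by positivity)
      rw [mul_pow, hss, na]
      have := sq_sum_le_card_mul_sum_sq (s := A) (f := fun i => |x i|)
      simpa only [sq_abs] using this
    calc ∑ i ∈ A, x i * dot (col Φ i) (mulVec' Φ u + v) ≤ ∑ i ∈ A, |x i| * c := by
          refine Finset.sum_le_sum fun i hi => ?_
          refine (le_abs_self _).trans ?_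
          rw [abs_mul]
          exact mul_le_mul_of_nonneg_left (hc i hi) (abs_nonneg _)
      _ = c * ∑ i ∈ A, |x i| := by rw [← Finset.sum_mul, mul_comm]
      _ ≤ _ := mul_le_mul_of_nonneg_left l1 hc0
  rw [inner_add_right] at p3
  rcases (norm_nonneg a).eq_or_lt with hz | hp
  · rw [← hz] at q1
    have : ξ ≤ 0 := by
      by_contra hh
      push Not at hh
      have := mul_pos hs hh
      linarith
    have : 0 ≤ E := by
      by_contra hh
      push Not at hh
      have := mul_neg_of_pos_of_neg hs hh
      have : 0 ≤ δ * ‖u‖ + √(1 + δ) * ‖v‖ := by positivity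
      linarith
    linarith
  · have h4 : ‖a‖ * (‖a‖ - (δ * ‖u‖ + √(1 + δ) * ‖v‖)) ≤ ‖a‖ * (c * √(A.card : ℝ)) := by
      rw [iau] at p1
      nlinarith
    have h5 := le_of_mul_le_mul_left h4 hp
    refine le_of_mul_le_mul_left ?_ hs
    linarith

/-- The residual energy drop at one step. -/
lemma run_facts {m n K : ℕ} {Φ : Matrix (Fin m) (Fin n) ℝ} {y : Vec m} (run : OMPRun Φ y K) :
    ∀ k ≤ K, (run.sets k).card ≤ k ∧ (∀ i, i ∉ run.sets k → run.est k i = 0) ∧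
      run.res k = y - mulVec' Φ (run.est k) := by
  intro k hk
  induction k with
  | zero =>
    rw [run.sets_zero, run.est_zero, run.res_zero]
    refine ⟨by simp, by simp, ?_⟩
    have : mulVec' Φ 0 = 0 := by ext i; simp [mulVec']
    simp [this]
  | succ k ih =>
    have ih := ih (by omega)
    refine ⟨?_, ?_, run.res_succ k (by omega)⟩
    · rw [run.sets_succ k (by omega)]
      exact (Finset.card_insert_le _ _).trans (by omega)
    · intro i hi
      by_contra hc
      exact hi (run.est_supp k (by omega) (Finset.mem_filter.2 ⟨Finset.mem_univ _, hc⟩))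

lemma run_drop {m n K : ℕ} {Φ : Matrix (Fin m) (Fin n) ℝ} {y : Vec m} (run : OMPRun Φ y K)
    (δ : ℝ) (hcol : ∀ j, ‖col Φ j‖ ^ 2 ≤ 1 + δ) (k : ℕ) (hk : k < K) :
    ‖run.res (k + 1)‖ ^ 2 ≤ ‖run.res k‖ ^ 2 -
      (1 - δ) * |dot (col Φ (run.idx (k + 1))) (run.res k)| ^ 2 := by
  obtain ⟨f1, f2, f3⟩ := run_facts run k hk.le
  set j := run.idx (k + 1)
  set d := dot (col Φ j) (run.res k) with hd
  have h := run.est_min k hk (run.est k + d • EuclideanSpace.single j (1 : ℝ)) (by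
    intro i hi
    rw [run.sets_succ k hk]
    by_contra hc
    rw [Finset.mem_insert, not_or] at hc
    refine (Finset.mem_filter.1 hi).2 ?_
    have : i ≠ j := hc.1
    simp [f2 i hc.2, this])
  rw [← run.res_succ k hk, mv_add, mv_smul, mv_single, ← sub_sub, ← f3] at h
  have h2 := pow_le_pow_left₀ (norm_nonneg _) h 2
  rw [norm_sub_sq_real, inner_smul_right, real_inner_comm, ← dot_inner, ← hd, norm_smul, mul_pow,
    Real.norm_eq_abs, sq_abs] at h2
  rw [sq_abs]
  nlinarith [mul_le_mul_of_nonneg_left (hcol j) (sq_nonneg d)]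

set_option maxHeartbeats 2000000 in
/-- upper bound on the final residual energy:
`‖r^K‖² ≤ 11⌈τK⌉ x_max² + (1 + 1/τ)‖v‖²` with `τ = δ^{1/2}`, under the SNR
condition `SNR ≥ κ² δ^{-3/2}`. -/
theorem stmt19 {m n K : ℕ} (Φ : Matrix (Fin m) (Fin n) ℝ) (δ : ℝ)
    (x : Vec n) (v y : Vec m) (T : Finset (Fin n)) (hTne : T.Nonempty)
    (hsupp : suppF x = T) (hcard : T.card = K) (hK1 : 1 ≤ K)
    (hRIP : RIPConst Φ (2 * K) δ) (h0 : 0 < δ) (h1 : δ < 1)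
    (hv : v ≠ 0) (hy : y = mulVec' Φ x + v)
    (hSNR : SNR Φ x v ≥
      (((T ×ˢ T).sup' (hTne.product hTne) fun p => |x p.1| / |x p.2|)) ^ 2
        * δ ^ (-(3 : ℝ) / 2))
    (run : OMPRun Φ y K) :
    ‖run.res K‖ ^ 2 ≤
      11 * (⌈Real.sqrt δ * K⌉₊ : ℝ) * (T.sup' hTne fun i => |x i|) ^ 2 +
        (1 + 1 / Real.sqrt δ) * ‖v‖ ^ 2 := by
  obtain ⟨⟨_, hR⟩, -⟩ := hRIP
  have hxT : ∀ i, i ∉ T → x i = 0 := by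
    intro i hi
    by_contra hc
    exact hi (hsupp ▸ Finset.mem_filter.2 ⟨Finset.mem_univ _, hc⟩)
  have hTx : ∀ i ∈ T, x i ≠ 0 := by
    intro i hi
    rw [← hsupp] at hi
    exact (Finset.mem_filter.1 hi).2
  set M := T.sup' hTne fun i => |x i| with hM
  have hxM : ∀ i ∈ T, |x i| ≤ M := fun i hi => Finset.le_sup' (fun i => |x i|) hi
  have hM0 : 0 ≤ M := by
    obtain ⟨i, hi⟩ := hTne
    exact (abs_nonneg _).trans (hxM i hi)
  set τ := √δ with hτ
  have hτ0 : 0 < τ := Real.sqrt_pos.2 h0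
  have hτ2 : τ ^ 2 = δ := Real.sq_sqrt h0.le
  have hτ1 : τ < 1 := by nlinarith
  set s := ⌈τ * K⌉₊ with hs
  have hsK : τ * K ≤ s := Nat.le_ceil _
  have hK0 : (1 : ℝ) ≤ K := by exact_mod_cast hK1
  have hs1 : 0 < s := Nat.ceil_pos.2 (by positivity)
  -- energy of x
  have nx : ‖x‖ ^ 2 = ∑ i ∈ T, |x i| ^ 2 := by
    rw [EuclideanSpace.norm_sq_eq]
    simp only [Real.norm_eq_abs]
    refine (Finset.sum_subset (Finset.subset_univ T) fun i _ hi => ?_).symm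
    simp [hxT i hi]
  have nxM : ‖x‖ ^ 2 ≤ K * M ^ 2 := by
    rw [nx, ← hcard, ← nsmul_eq_mul]
    exact Finset.sum_le_card_nsmul _ _ _ fun i hi => pow_le_pow_left₀ (abs_nonneg _) (hxM i hi) 2
  have hΦx : ‖mulVec' Φ x‖ ^ 2 ≤ (1 + δ) * ‖x‖ ^ 2 :=
    (hR x (supp_card_le hxT (by omega))).2
  -- noise
  have hvp : 0 < ‖v‖ := norm_pos_iff.2 hv
  have hvn : ‖v‖ ^ 2 ≤ τ ^ 3 * ‖mulVec' Φ x‖ ^ 2 := by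
    have hκ : 1 ≤ (T ×ˢ T).sup' (hTne.product hTne) fun p => |x p.1| / |x p.2| := by
      obtain ⟨i, hi⟩ := hTne
      have := Finset.le_sup' (fun p : Fin n × Fin n => |x p.1| / |x p.2|)
        (Finset.mk_mem_product hi hi)
      rwa [div_self (abs_ne_zero.2 (hTx i hi))] at this
    have hp : δ ^ (-(3 : ℝ) / 2) = (τ ^ 3)⁻¹ := by
      rw [hτ, Real.sqrt_eq_rpow, ← Real.rpow_natCast, ← Real.rpow_mul h0.le,
        ← Real.rpow_neg h0.le]
      norm_num
    have h2 : (τ ^ 3)⁻¹ ≤ ‖mulVec' Φ x‖ ^ 2 / ‖v‖ ^ 2 := by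
      rw [hp] at hSNR
      refine le_trans ?_ hSNR
      exact le_mul_of_one_le_left (by positivity) (one_le_pow₀ hκ)
    rw [inv_le_iff_one_le_mul₀ (by positivity)] at h2
    have hv2 : 0 < ‖v‖ ^ 2 := by positivity
    calc ‖v‖ ^ 2 ≤ ‖v‖ ^ 2 * (τ ^ 3 * (‖mulVec' Φ x‖ ^ 2 / ‖v‖ ^ 2)) :=
          le_mul_of_one_le_right hv2.le (by linarith)
      _ = _ := by field_simp
  have hcol : ∀ j, ‖col Φ j‖ ^ 2 ≤ 1 + δ := by
    intro j
    have := (hR (EuclideanSpace.single j (1 : ℝ)) (supp_card_le (S := {j})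
      (fun i hi => by
        have : i ≠ j := by simpa using hi
        simp [this]) (by simp; omega))).2
    rw [mv_single] at this
    simpa using this
  -- energy of y
  have hyn : ‖y‖ ^ 2 ≤ (1 + τ) * ‖mulVec' Φ x‖ ^ 2 + (1 + 1 / τ) * ‖v‖ ^ 2 := by
    have hle : ‖y‖ ≤ ‖mulVec' Φ x‖ + ‖v‖ := hy ▸ norm_add_le _ _
    have h2 := pow_le_pow_left₀ (norm_nonneg _) hle 2
    have h3 : 0 ≤ (τ * ‖mulVec' Φ x‖ - ‖v‖) ^ 2 / τ := by positivity
    have h4 : (τ * ‖mulVec' Φ x‖ - ‖v‖) ^ 2 / τ = τ * ‖mulVec' Φ x‖ ^ 2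
      - 2 * ‖mulVec' Φ x‖ * ‖v‖ + 1 / τ * ‖v‖ ^ 2 := by field_simp; ring
    nlinarith
  have hdrop := run_drop run δ hcol
  have hmono : ∀ k ≤ K, ‖run.res k‖ ^ 2 ≤ ‖y‖ ^ 2 := by
    intro k hk
    induction k with
    | zero => rw [run.res_zero]
    | succ k ih =>
      have a1 := ih (by omega)
      have a2 := hdrop k (by omega)
      have a3 : 0 ≤ (1 - δ) * |dot (col Φ (run.idx (k + 1))) (run.res k)| ^ 2 :=
        mul_nonneg (by linarith) (by positivity)
      linarith
  have hKM : τ * (K * M ^ 2) ≤ s * M ^ 2 := by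
    have := mul_le_mul_of_nonneg_right hsK (sq_nonneg M)
    linarith
  have hKM0 : 0 ≤ K * M ^ 2 := by positivity
  rcases le_or_gt (1 / 8) τ with hbig | hsmall
  · have b1 := hmono K le_rfl
    have b2 : (1 + τ) * ‖mulVec' Φ x‖ ^ 2 ≤ (1 + τ) * ((1 + τ ^ 2) * (K * M ^ 2)) := by
      refine mul_le_mul_of_nonneg_left (hΦx.trans ?_) (by linarith)
      rw [hτ2]
      exact mul_le_mul_of_nonneg_left nxM (by linarith)
    have b3 : (1 + τ) * (1 + τ ^ 2) ≤ 11 * τ := by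
      have : τ ^ 2 ≤ τ := by nlinarith
      have : τ ^ 3 ≤ τ := by nlinarith
      nlinarith
    have b4 := mul_le_mul_of_nonneg_right b3 hKM0
    linarith
  -- main case
  have hδ64 : δ ≤ 1 / 64 := by nlinarith
  obtain ⟨a, a1, a2, a3, a4, a5⟩ := exists_sorted (fun i => |x i|) M T
    fun i hi => ⟨abs_nonneg _, hxM i hi⟩
  rw [hcard] at a2 a3 a4 a5
  have aM : ∀ j, a j ≤ M := fun j => by
    rcases lt_or_ge j K with h | h
    exacts [a3 j h, (a2 j h).trans_le hM0]
  have hsq : √(s : ℝ) ^ 2 = s := Real.sq_sqrt (by positivity)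
  have hτ3 : τ ^ 3 ≤ 1 / 8 * τ ^ 2 := by
    have := mul_le_mul_of_nonneg_right hsmall.le (sq_nonneg τ)
    linarith [show τ ^ 3 = τ * τ ^ 2 by ring]
  have hv1 : √(1 + δ) * ‖v‖ ≤ √(s : ℝ) * (1.04 * τ * M) := by
    refine le_of_sq_le_sq_aux ?_ (by positivity)
    rw [mul_pow, mul_pow, hsq, Real.sq_sqrt (by linarith)]
    have c1 : τ ^ 3 * ‖mulVec' Φ x‖ ^ 2 ≤ τ ^ 3 * ((1 + δ) * (K * M ^ 2)) :=
      mul_le_mul_of_nonneg_left (hΦx.trans (mul_le_mul_of_nonneg_left nxM (by linarith)))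
        (by positivity)
    have c2 := mul_le_mul_of_nonneg_left hKM (sq_nonneg τ)
    calc (1 + δ) * ‖v‖ ^ 2 ≤ (1 + δ) * (τ ^ 3 * ((1 + δ) * (K * M ^ 2))) :=
          mul_le_mul_of_nonneg_left (hvn.trans c1) (by linarith)
      _ = (1 + δ) ^ 2 * (τ ^ 2 * (τ * (K * M ^ 2))) := by ring
      _ ≤ 1.04 ^ 2 * (τ ^ 2 * (s * M ^ 2)) := by
          refine mul_le_mul ?_ c2 (by positivity) (by norm_num)
          exact pow_le_pow_left₀ (by linarith) (by linarith) 2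
      _ = _ := by ring
  have hv16 : ‖v‖ ≤ 1 / 16 * ‖mulVec' Φ x‖ := by
    refine le_of_sq_le_sq_aux ?_ (by positivity)
    have : τ ^ 3 ≤ 1 / 256 := by linarith
    have := mul_le_mul_of_nonneg_right this (sq_nonneg ‖mulVec' Φ x‖)
    nlinarith
  have hstep : ∀ k < K, ‖run.res (k + 1)‖ ^ 2 ≤ ‖run.res k‖ ^ 2 -
      (1 - δ) * (a (k + s) ^ 2 - 4 * τ * M ^ 2) := by
    intro k hk
    obtain ⟨f1, f2, f3⟩ := run_facts run k hk.le
    refine (hdrop k hk).trans ?_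
    set c := |dot (col Φ (run.idx (k + 1))) (run.res k)| with hc
    have hc0 : 0 ≤ c := abs_nonneg _
    suffices hh : a (k + s) ^ 2 - 4 * τ * M ^ 2 ≤ c ^ 2 by
      have := mul_le_mul_of_nonneg_left hh (show (0 : ℝ) ≤ 1 - δ by linarith)
      linarith
    rcases lt_or_ge (k + s) K with hks | hks
    swap
    · rw [a2 _ hks]
      have : 0 ≤ τ * M ^ 2 := by positivity
      nlinarith
    obtain ⟨B, b1, b2, b3⟩ := a5 _ hks
    have hBc : s ≤ (B \ run.sets k).card := by
      have := Finset.le_card_sdiff (run.sets k) B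
      omega
    obtain ⟨A, hA1, hA2⟩ := Finset.exists_subset_card_eq hBc
    set u := x - run.est k with hu
    have hru : run.res k = mulVec' Φ u + v := by
      have hyu : mulVec' Φ u + v = y - mulVec' Φ (run.est k) := by
        rw [hu, mv_sub, sub_add_eq_add_sub, ← hy]
      rw [f3, hyu]
    have hSc : (T ∪ run.sets k).card ≤ 2 * K :=
      (Finset.card_union_le _ _).trans (by omega)
    have huS : ∀ i, i ∉ T ∪ run.sets k → u i = 0 := by
      intro i hi
      rw [Finset.mem_union, not_or] at hi
      simp [hu, hxT i hi.1, f2 i hi.2]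
    have hAT : ∀ i ∈ A, i ∈ T ∧ i ∉ run.sets k ∧ i ∈ B := fun i hi => by
      have := Finset.mem_sdiff.1 (hA1 hi)
      exact ⟨b1 this.1, this.2, this.1⟩
    have hun : δ * ‖u‖ ≤ √(s : ℝ) * (0.5 * τ * M) := by
      have e1 : ‖mulVec' Φ u‖ ≤ 9 / 8 * ‖mulVec' Φ x‖ := by
        have g1 : ‖run.res k‖ ≤ ‖y‖ := le_of_sq_le_sq_aux (hmono k hk.le) (norm_nonneg _)
        have g2 : ‖y‖ ≤ ‖mulVec' Φ x‖ + ‖v‖ := hy ▸ norm_add_le _ _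
        have g3 : ‖mulVec' Φ u‖ ≤ ‖run.res k‖ + ‖v‖ := by
          rw [show mulVec' Φ u = run.res k - v by rw [hru]; abel]
          exact norm_sub_le _ _
        linarith
      have e2 := pow_le_pow_left₀ (norm_nonneg _) e1 2
      have e3 := (hR u (supp_card_le huS hSc)).1
      have e4 : ‖u‖ ^ 2 ≤ 1.44 * (K * M ^ 2) := by
        have t1 : 63 / 64 * ‖u‖ ^ 2 ≤ (1 - δ) * ‖u‖ ^ 2 :=
          mul_le_mul_of_nonneg_right (by linarith) (sq_nonneg _)
        have t2 : (1 + δ) * ‖x‖ ^ 2 ≤ 65 / 64 * (K * M ^ 2) :=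
          mul_le_mul (by linarith) nxM (sq_nonneg _) (by norm_num)
        nlinarith
      refine le_of_sq_le_sq_aux ?_ (by positivity)
      rw [mul_pow, mul_pow, hsq, ← hτ2]
      calc (τ ^ 2) ^ 2 * ‖u‖ ^ 2 ≤ (τ ^ 2) ^ 2 * (1.44 * (K * M ^ 2)) :=
            mul_le_mul_of_nonneg_left e4 (by positivity)
        _ = 1.44 * τ ^ 3 * (τ * (K * M ^ 2)) := by ring
        _ ≤ 0.25 * τ ^ 2 * (s * M ^ 2) :=
            mul_le_mul (by linarith [sq_nonneg τ]) hKM (by positivity) (by positivity)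
        _ = _ := by ring
    have hcb := corr_bound Φ δ h0.le hR (T ∪ run.sets k) A hSc
      (fun i hi => Finset.mem_union_left _ (hAT i hi).1) x u v huS
      (fun i hi => by simp [hu, f2 i (hAT i hi).2.1]) (by omega) c (a (k + s)) (2 * τ * M)
      (a1 _) (fun i hi => b3 i (hAT i hi).2.2)
      (fun i hi => by rw [← hru]; exact run.idx_max k hk i (hAT i hi).2.1)
      (by
        rw [hA2]
        have : 0 ≤ √(s : ℝ) * (τ * M) := by positivity
        nlinarith)
    have q1 := a1 (k + s)
    have q2 := aM (k + s)
    have q3 : 0 ≤ τ * M := by positivity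
    have q4 : τ * M * a (k + s) ≤ τ * M * M := mul_le_mul_of_nonneg_left q2 q3
    rcases le_or_gt (a (k + s)) (2 * τ * M) with hz | hz
    · nlinarith
    · have := pow_le_pow_left₀ (by linarith) hcb 2
      nlinarith [sq_nonneg (τ * M)]
  have hsum : ∀ k ≤ K, ‖run.res k‖ ^ 2 ≤ ‖y‖ ^ 2 -
      (1 - δ) * (∑ j ∈ Finset.range k, a (j + s) ^ 2 - k * (4 * τ * M ^ 2)) := by
    intro k hk
    induction k with
    | zero => rw [run.res_zero]; simp
    | succ k ih =>
      have g1 := ih (by omega)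
      have g2 := hstep k (by omega)
      rw [Finset.sum_range_succ]
      push_cast
      linarith
  have hfin := hsum K le_rfl
  have hshift : ‖x‖ ^ 2 - s * M ^ 2 ≤ ∑ j ∈ Finset.range K, a (j + s) ^ 2 := by
    have g1 : ∑ j ∈ Finset.range (s + K), a j ^ 2 =
        ∑ j ∈ Finset.range s, a j ^ 2 + ∑ j ∈ Finset.range K, a (s + j) ^ 2 :=
      Finset.sum_range_add _ _ _
    have g2 : ∑ j ∈ Finset.range K, a j ^ 2 ≤ ∑ j ∈ Finset.range (s + K), a j ^ 2 :=
      Finset.sum_le_sum_of_subset_of_nonneg (Finset.range_subset_range.2 (by omega))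
        fun _ _ _ => sq_nonneg _
    have g3 : ∑ j ∈ Finset.range s, a j ^ 2 ≤ s * M ^ 2 := by
      have := Finset.sum_le_card_nsmul (Finset.range s) (fun j => a j ^ 2) (M ^ 2)
        fun j _ => pow_le_pow_left₀ (a1 j) (aM j) 2
      simpa using this
    simp only [add_comm s] at g1
    rw [add_comm K s] at g1
    rw [nx]
    linarith
  have z1 := mul_le_mul_of_nonneg_left hshift (show (0 : ℝ) ≤ 1 - δ by linarith)
  have z2 : (1 + τ) * ‖mulVec' Φ x‖ ^ 2 ≤ (1 + τ) * ((1 + δ) * ‖x‖ ^ 2) :=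
    mul_le_mul_of_nonneg_left hΦx (by linarith)
  have z3 : ((1 + τ) * (1 + δ) - (1 - δ)) * ‖x‖ ^ 2 ≤ 2 * τ * (K * M ^ 2) := by
    refine mul_le_mul ?_ nxM (sq_nonneg _) (by positivity)
    rw [← hτ2]
    nlinarith [sq_nonneg τ]
  have z4 : 0 ≤ δ * (s * M ^ 2) := by positivity
  have z5 : 0 ≤ δ * (τ * (K * M ^ 2)) := by positivity
  have z6 : 0 ≤ (s : ℝ) * M ^ 2 := by positivity
  nlinarith

end
end
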